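/- For each i with 1 ≤ i ≤ n and every point x ∈ U₀, the series F satisfies x_{1i}·∂F/∂x_{1i}(x) + x_{2i}·∂F/∂x_{2i}(x) = α_i·F(x); that is, F is annihilated by the Euler operator θ_{1i} + θ_{2i} − α_i, where θ_{ij} = x_{ij}∂/∂x_{ij}. -/

import Mathlib

open Complex Function Polynomial

/-- Partial derivative of `f` with respect to the coordinate `p`. -/
noncomputable def pd {n : ℕ} (p : Fin 2 × Fin n)
    (f : ((Fin 2 × Fin n) → ℝ) → ℂ) (x : (Fin 2 × Fin n) → ℝ) : ℂ :=
  deriv (fun s : ℝ => f (Function.update x p s)) (x p)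

/-- The coefficient
`c_m = (−1)^{|m|} (∏ₖ (−α_k)_{m_k}) (b^{γ+|m|+1} − a^{γ+|m|+1}) / ((γ+|m|+1) ∏ₖ m_k!)`,
where `(z)_j` is the Pochhammer symbol. -/
noncomputable def cm {n : ℕ} (α : Fin n → ℂ) (γ : ℂ) (a b : ℝ)
    (m : Fin n → ℕ) : ℂ :=
  (-1 : ℂ) ^ (∑ k, m k) * (∏ k, (ascPochhammer ℂ (m k)).eval (-(α k)))
    * ((b : ℂ) ^ (γ + ((∑ k, m k : ℕ) : ℂ) + 1)
        - (a : ℂ) ^ (γ + ((∑ k, m k : ℕ) : ℂ) + 1))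
    / ((γ + ((∑ k, m k : ℕ) : ℂ) + 1) * ∏ k, ((m k).factorial : ℂ))

/-- The series `F(x) = (∏ₖ x_{1k}^{α_k}) Σ_{m ∈ ℕⁿ} c_m ∏ₖ (x_{2k}/x_{1k})^{m_k}`;
the first row of `x` is indexed by `0 : Fin 2`, the second row by `1 : Fin 2`. -/
noncomputable def Fser {n : ℕ} (α : Fin n → ℂ) (γ : ℂ) (a b : ℝ)
    (x : (Fin 2 × Fin n) → ℝ) : ℂ :=
  (∏ k, (x (0, k) : ℂ) ^ (α k)) *
    ∑' m : Fin n → ℕ, cm α γ a b m * ∏ k, ((x (1, k) / x (0, k) : ℝ) : ℂ) ^ m k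

/-!
Since `(-1)^j (-α)_j / j!` is the binomial coefficient `Ring.choose α j`, the coefficient `c_m` is
`O (∏ₖ |choose αₖ mₖ| R^{mₖ})` with `R = max |a| |b|`. The series in the ratios `x_{2k} / x_{1k}` is
therefore dominated by a product of binomial series, and is holomorphic where the ratios are smaller
than `1 / R`. A monomial `∏ₖ x_{1k}^{αₖ}` times a differentiable function of the ratios satisfies
the Euler equation of degree `αᵢ` in the column `i`, because `θ_{1i} + θ_{2i}` kills the ratios.
-/

open Filter Topology Asymptotics

section BinomialSeries

lemma neg_one_pow_mul_ascPochhammer_eval_neg_div_factorial {𝕜 : Type*} [Field 𝕜]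
    [CharZero 𝕜] (z : 𝕜) (j : ℕ) :
    (-1) ^ j * (ascPochhammer 𝕜 j).eval (-z) / (j.factorial : 𝕜) = Ring.choose z j := by
  have hchoose : (descPochhammer 𝕜 j).eval z = (j.factorial : 𝕜) * Ring.choose z j := by
    rw [← nsmul_eq_mul, ← Ring.descPochhammer_eq_factorial_smul_choose,
      descPochhammer_smeval_eq_ascPochhammer, ascPochhammer_smeval_eq_eval,
      descPochhammer_eval_eq_ascPochhammer]
  have hj : (j.factorial : 𝕜) ≠ 0 := mod_cast j.factorial_ne_zero
  rw [ascPochhammer_eval_neg_eq_descPochhammer, hchoose, ← mul_assoc, ← mul_pow, neg_one_mul,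
    neg_neg, one_pow, one_mul, mul_div_cancel_left₀ _ hj]

lemma summable_norm_choose_mul_pow {𝕜 : Type*} [RCLike 𝕜] (z : 𝕜) {q : ℝ} (hq₀ : 0 ≤ q)
    (hq₁ : q < 1) :
    Summable fun j : ℕ => ‖Ring.choose z j‖ * q ^ j := by
  lift q to NNReal using hq₀
  have hq : (q : ENNReal) < (binomialSeries 𝕜 z).radius :=
    lt_of_lt_of_le (mod_cast hq₁) binomialSeries_radius_ge_one
  simpa only [binomialSeries, FormalMultilinearSeries.ofScalars_norm] using
    (binomialSeries 𝕜 z).summable_norm_mul_pow hq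

end BinomialSeries

section SeveralVariables

variable {ι : Type*} [Fintype ι]

lemma summable_pi_prod_of_nonneg {κ : ι → Type*} {f : ∀ k, κ k → ℝ} (hf₀ : ∀ k j, 0 ≤ f k j)
    (hf : ∀ k, Summable (f k)) : Summable fun m : ∀ k, κ k => ∏ k, f k (m k) := by
  classical
  have hprod₀ (m : ∀ k, κ k) : 0 ≤ ∏ k, f k (m k) := Finset.prod_nonneg fun k _ => hf₀ k _
  refine summable_of_sum_le (c := ∏ k, ∑' j, f k j) hprod₀ fun u => ?_
  calc ∑ m ∈ u, ∏ k, f k (m k)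
      ≤ ∑ m ∈ Fintype.piFinset fun k => u.image (· k), ∏ k, f k (m k) :=
        Finset.sum_le_sum_of_subset_of_nonneg
          (fun m hm => Fintype.mem_piFinset.2 fun k => Finset.mem_image_of_mem (· k) hm)
          fun m _ _ => hprod₀ m
    _ = ∏ k, ∑ j ∈ u.image (· k), f k j := (Finset.prod_univ_sum _ _).symm
    _ ≤ ∏ k, ∑' j, f k j :=
        Finset.prod_le_prod (fun k _ => Finset.sum_nonneg fun j _ => hf₀ k j)
          fun k _ => (hf k).sum_le_tsum _ fun j _ => hf₀ k j

lemma differentiableOn_tsum_mul_prod_pow {c : (ι → ℕ) → ℂ} {r : ι → ℝ}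
    (hc : Summable fun m => ‖c m‖ * ∏ k, r k ^ m k) {φ : ℂ → ι → ℂ} {U : Set ℂ}
    (hU : IsOpen U) (hφ : DifferentiableOn ℂ φ U) (hφr : ∀ w ∈ U, ∀ k, ‖φ w k‖ ≤ r k) :
    DifferentiableOn ℂ (fun w => ∑' m, c m * ∏ k, φ w k ^ m k) U := by
  refine differentiableOn_tsum_of_summable_norm hc (fun m => ?_) hU fun m w hw => ?_
  · have hφk := differentiableOn_pi.1 hφ
    exact (DifferentiableOn.fun_finsetProd fun k _ => (hφk k).fun_pow _).const_mul _
  · rw [norm_mul, norm_prod]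
    gcongr with k
    rw [norm_pow]
    exact pow_le_pow_left₀ (norm_nonneg _) (hφr w hw k) _

lemma differentiableAt_tsum_mul_prod_update_pow [DecidableEq ι] {c : (ι → ℕ) → ℂ} {r : ι → ℝ}
    (hc : Summable fun m => ‖c m‖ * ∏ k, r k ^ m k) {z : ι → ℂ} (hz : ∀ k, ‖z k‖ < r k) (i : ι) :
    DifferentiableAt ℂ (fun w => ∑' m, c m * ∏ k, update z i w k ^ m k) (z i) := by
  have hball : Metric.ball (0 : ℂ) (r i) ∈ 𝓝 (z i) :=
    Metric.isOpen_ball.mem_nhds (mem_ball_zero_iff.2 (hz i))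
  refine (differentiableOn_tsum_mul_prod_pow hc Metric.isOpen_ball
    (fun w _ => (hasDerivAt_update z i w).differentiableAt.differentiableWithinAt)
    fun w hw k => ?_).differentiableAt hball
  rcases eq_or_ne k i with rfl | hk
  · simpa only [update_self] using (mem_ball_zero_iff.1 hw).le
  · simpa only [update_of_ne hk] using (hz k).le

end SeveralVariables

section Coefficients

lemma isBigO_top_cpow_add_natCast {s t : ℂ} (h : t = 0 → ∀ N : ℕ, s + N ≠ 0) :
    (fun N : ℕ => t ^ (s + N)) =O[⊤] fun N => ‖t‖ ^ N := by
  refine isBigO_top.2 ⟨‖t ^ s‖, fun N => ?_⟩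
  rcases eq_or_ne t 0 with rfl | ht
  · rw [zero_cpow (h rfl N), norm_zero]
    positivity
  · rw [cpow_add _ _ ht, cpow_natCast, norm_mul, norm_pow, norm_pow, norm_norm]

lemma isBigO_top_inv_add_natCast {𝕜 : Type*} [RCLike 𝕜] (s : 𝕜) :
    (fun N : ℕ => (s + N)⁻¹) =O[⊤] fun _ => (1 : ℝ) := by
  have hlim : Tendsto (fun N : ℕ => (s + N)⁻¹) atTop (𝓝 0) :=
    tendsto_inv₀_cobounded.comp
      ((tendsto_const_add_cobounded s).comp tendsto_natCast_atTop_cobounded)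
  obtain ⟨C, hC⟩ := hlim.norm.bddAbove_range
  exact isBigO_top.2 ⟨C, fun N => by simpa using hC (Set.mem_range_self N)⟩

lemma isBigO_top_cpow_sub_cpow_div {s : ℂ} (hs : ∀ N : ℕ, s + N ≠ 0) (a b : ℂ) :
    (fun N : ℕ => (b ^ (s + N) - a ^ (s + N)) / (s + N))
      =O[⊤] fun N => max ‖a‖ ‖b‖ ^ N := by
  have hpow {t : ℂ} (ht : ‖t‖ ≤ max ‖a‖ ‖b‖) :
      (fun N : ℕ => t ^ (s + N)) =O[⊤] fun N => max ‖a‖ ‖b‖ ^ N :=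
    (isBigO_top_cpow_add_natCast fun _ => hs).trans <| isBigO_of_le _ fun N => by
      rw [norm_pow, norm_pow, norm_norm, Real.norm_of_nonneg (by positivity)]
      gcongr
  simpa only [div_eq_mul_inv, mul_one] using
    ((hpow (le_max_right _ _)).sub (hpow (le_max_left _ _))).mul (isBigO_top_inv_add_natCast s)

variable {n : ℕ} (α : Fin n → ℂ) (γ : ℂ) (a b : ℝ)

lemma cm_eq_prod_choose_mul (m : Fin n → ℕ) :
    cm α γ a b m = (∏ k, Ring.choose (α k) (m k)) *
      (((b : ℂ) ^ (γ + 1 + (∑ k, m k : ℕ)) - (a : ℂ) ^ (γ + 1 + (∑ k, m k : ℕ))) /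
        (γ + 1 + (∑ k, m k : ℕ))) := by
  simp_rw [← neg_one_pow_mul_ascPochhammer_eval_neg_div_factorial, Finset.prod_div_distrib,
    Finset.prod_mul_distrib, Finset.prod_pow_eq_pow_sum]
  rw [cm, add_right_comm γ, div_mul_div_comm, mul_comm (γ + 1 + _)]

variable {γ}

lemma isBigO_top_cm (hγ : ∀ j : ℕ, γ ≠ -((j : ℂ) + 1)) :
    cm α γ a b =O[⊤] fun m => ∏ k, ‖Ring.choose (α k) (m k)‖ * max |a| |b| ^ m k := by
  have hγ' (N : ℕ) : γ + 1 + N ≠ 0 := fun h => hγ N (by linear_combination h)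
  have hchoose : (fun m : Fin n → ℕ => ∏ k, Ring.choose (α k) (m k))
      =O[⊤] fun m => ∏ k, ‖Ring.choose (α k) (m k)‖ :=
    isBigO_of_le _ fun m => by rw [← norm_prod, norm_norm]
  have hquot := (isBigO_top_cpow_sub_cpow_div hγ' a b).comp_tendsto
    (l' := ⊤) (k := fun m : Fin n → ℕ => ∑ k, m k) tendsto_top
  simpa only [← cm_eq_prod_choose_mul, Function.comp_def, norm_real, Real.norm_eq_abs,
    Finset.prod_mul_distrib, Finset.prod_pow_eq_pow_sum] using hchoose.mul hquot

lemma summable_norm_cm_mul_prod_pow (hγ : ∀ j : ℕ, γ ≠ -((j : ℂ) + 1)) {r : Fin n → ℝ}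
    (hr₀ : ∀ k, 0 ≤ r k) (hr : ∀ k, max |a| |b| * r k < 1) :
    Summable fun m => ‖cm α γ a b m‖ * ∏ k, r k ^ m k := by
  have hq₀ (k : Fin n) : 0 ≤ max |a| |b| * r k :=
    mul_nonneg ((abs_nonneg a).trans (le_max_left _ _)) (hr₀ k)
  have hdom : Summable fun m : Fin n → ℕ =>
      ∏ k, ‖Ring.choose (α k) (m k)‖ * (max |a| |b| * r k) ^ m k :=
    summable_pi_prod_of_nonneg (κ := fun _ => ℕ)
      (f := fun k j => ‖Ring.choose (α k) j‖ * (max |a| |b| * r k) ^ j)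
      (fun k j => mul_nonneg (norm_nonneg _) (pow_nonneg (hq₀ k) j))
      fun k => summable_norm_choose_mul_pow (α k) (hq₀ k) (hr k)
  refine summable_of_isBigO hdom (IsBigO.mono ?_ le_top)
  simpa only [mul_pow, ← mul_assoc, Finset.prod_mul_distrib] using
    (isBigO_top_cm α a b hγ).norm_left.mul (isBigO_refl (fun m => ∏ k, r k ^ m k) ⊤)

lemma differentiableAt_tsum_cm_mul_prod_update_pow (hγ : ∀ j : ℕ, γ ≠ -((j : ℂ) + 1))
    {z : Fin n → ℂ} (hz : ∀ k, max |a| |b| * ‖z k‖ < 1) (i : Fin n) :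
    DifferentiableAt ℂ (fun w => ∑' m, cm α γ a b m * ∏ k, update z i w k ^ m k) (z i) := by
  have hradius (k : Fin n) : ∃ r > ‖z k‖, max |a| |b| * r < 1 :=
    ((continuous_const_mul _).continuousAt.eventually_lt_const (hz k)).exists_gt
  choose r hzr hr using hradius
  have hr₀ (k : Fin n) : 0 ≤ r k := (norm_nonneg _).trans (hzr k).le
  exact differentiableAt_tsum_mul_prod_update_pow
    (summable_norm_cm_mul_prod_pow α a b hγ hr₀ hr) hzr i

end Coefficients

section EulerEquation

variable {n : ℕ}

/-- The monomial `∏ₖ x_{1k}^{α_k}` in the first row of `x`, the prefactor of the series `F`. -/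
noncomputable def rowMonomial (α : Fin n → ℂ) (x : Fin 2 × Fin n → ℝ) : ℂ :=
  ∏ k, (x (0, k) : ℂ) ^ α k

/-- The ratios `x_{2k} / x_{1k}`, the variables of the power series in `F`. They are complex numbers
so that this series can be treated as a holomorphic function. -/
noncomputable def colRatio (x : Fin 2 × Fin n → ℝ) (k : Fin n) : ℂ :=
  (x (1, k) / x (0, k) : ℝ)

lemma colRatio_update_zero (x : Fin 2 × Fin n → ℝ) (i : Fin n) (s : ℝ) :
    colRatio (update x (0, i) s) = update (colRatio x) i (x (1, i) / s : ℝ) := by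
  ext k
  rcases eq_or_ne k i with rfl | hk <;> simp [colRatio, *]

lemma colRatio_update_one (x : Fin 2 × Fin n → ℝ) (i : Fin n) (t : ℝ) :
    colRatio (update x (1, i) t) = update (colRatio x) i (t / x (0, i) : ℝ) := by
  ext k
  rcases eq_or_ne k i with rfl | hk <;> simp [colRatio, *]

lemma rowMonomial_update_one (α : Fin n → ℂ) (x : Fin 2 × Fin n → ℝ) (i : Fin n) (t : ℝ) :
    rowMonomial α (update x (1, i) t) = rowMonomial α x := by
  simp [rowMonomial]

lemma hasDerivAt_rowMonomial_update_zero (α : Fin n → ℂ) {x : Fin 2 × Fin n → ℝ} {i : Fin n}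
    (hx : x (0, i) ≠ 0) :
    HasDerivAt (fun s => rowMonomial α (update x (0, i) s))
      (α i / x (0, i) * rowMonomial α x) (x (0, i)) := by
  have hpow : HasDerivAt (fun s : ℝ => (s : ℂ) ^ α i) (α i * (x (0, i) : ℂ) ^ (α i - 1))
      (x (0, i)) := by
    rcases eq_or_ne (α i) 0 with h | h
    · simpa [h] using hasDerivAt_const (x (0, i)) (1 : ℂ)
    · exact hasDerivAt_ofReal_cpow_const hx h
  have hsplit (s : ℝ) : rowMonomial α (update x (0, i) s) =
      (s : ℂ) ^ α i * ∏ k ∈ Finset.univ.erase i, (x (0, k) : ℂ) ^ α k := by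
    rw [rowMonomial, ← Finset.mul_prod_erase _ _ (Finset.mem_univ i), update_self]
    congr 1
    refine Finset.prod_congr rfl fun k hk => ?_
    rw [update_of_ne (by simpa using Finset.ne_of_mem_erase hk)]
  have hself := hsplit (x (0, i))
  rw [update_eq_self] at hself
  simp_rw [hsplit, hself]
  refine (hpow.mul_const _).congr_deriv ?_
  rw [cpow_sub _ _ (ofReal_ne_zero.2 hx), cpow_one]
  ring

variable {α : Fin n → ℂ} {G : (Fin n → ℂ) → ℂ} {G' : ℂ} {x : Fin 2 × Fin n → ℝ} {i : Fin n}

lemma pd_zero_rowMonomial_mul_comp_colRatio (hx : x (0, i) ≠ 0)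
    (hG : HasDerivAt (fun w => G (update (colRatio x) i w)) G' (colRatio x i)) :
    pd (0, i) (fun x => rowMonomial α x * G (colRatio x)) x =
      α i / x (0, i) * rowMonomial α x * G (colRatio x)
        - rowMonomial α x * (G' * (x (1, i) / x (0, i) ^ 2)) := by
  have hratio : HasDerivAt (fun s : ℝ => ((x (1, i) / s : ℝ) : ℂ))
      ((-x (1, i) / x (0, i) ^ 2 : ℝ) : ℂ) (x (0, i)) := by
    simpa using ((hasDerivAt_const _ (x (1, i))).fun_div (hasDerivAt_id _) hx).ofReal_comp
  have hcomp : HasDerivAt (fun s => G (colRatio (update x (0, i) s)))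
      (G' * (-x (1, i) / x (0, i) ^ 2 : ℝ)) (x (0, i)) := by
    simp_rw [colRatio_update_zero]
    exact hG.comp (x (0, i)) hratio
  rw [pd, ((hasDerivAt_rowMonomial_update_zero α hx).fun_mul hcomp).deriv, update_eq_self]
  push_cast
  ring

lemma pd_one_rowMonomial_mul_comp_colRatio
    (hG : HasDerivAt (fun w => G (update (colRatio x) i w)) G' (colRatio x i)) :
    pd (1, i) (fun x => rowMonomial α x * G (colRatio x)) x =
      rowMonomial α x * (G' / x (0, i)) := by
  have hratio : HasDerivAt (fun t : ℝ => ((t / x (0, i) : ℝ) : ℂ))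
      ((1 / x (0, i) : ℝ) : ℂ) (x (1, i)) :=
    ((hasDerivAt_id _).div_const _).ofReal_comp
  have hcomp : HasDerivAt (fun t => G (update (colRatio x) i (t / x (0, i) : ℝ)))
      (G' * (1 / x (0, i) : ℝ)) (x (1, i)) :=
    HasDerivAt.comp (x (1, i)) (h₂ := fun w => G (update (colRatio x) i w)) hG hratio
  simp_rw [pd, rowMonomial_update_one, colRatio_update_one]
  rw [(hcomp.const_mul _).deriv]
  push_cast
  ring

theorem euler_rowMonomial_mul_comp_colRatio (hx : x (0, i) ≠ 0)
    (hG : DifferentiableAt ℂ (fun w => G (update (colRatio x) i w)) (colRatio x i)) :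
    (x (0, i) : ℂ) * pd (0, i) (fun x => rowMonomial α x * G (colRatio x)) x
      + (x (1, i) : ℂ) * pd (1, i) (fun x => rowMonomial α x * G (colRatio x)) x
      = α i * (rowMonomial α x * G (colRatio x)) := by
  have hx' : (x (0, i) : ℂ) ≠ 0 := ofReal_ne_zero.2 hx
  rw [pd_zero_rowMonomial_mul_comp_colRatio hx hG.hasDerivAt,
    pd_one_rowMonomial_mul_comp_colRatio hG.hasDerivAt]
  field_simp
  ring

end EulerEquation

-- Powers with a negative base `x_{1k}`, `a` or `b` are taken on the principal branch.
theorem stmt10_general {n : ℕ} (α : Fin n → ℂ) (γ : ℂ) (a b : ℝ)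
    (hγ : ∀ j : ℕ, γ ≠ -((j : ℂ) + 1)) (i : Fin n) (x : (Fin 2 × Fin n) → ℝ)
    (hU : ∀ k, max |a| |b| * |x (1, k)| < |x (0, k)|) :
    (x (0, i) : ℂ) * pd (0, i) (Fser α γ a b) x
      + (x (1, i) : ℂ) * pd (1, i) (Fser α γ a b) x
      = α i * Fser α γ a b x := by
  have hx (k : Fin n) : 0 < |x (0, k)| := lt_of_le_of_lt (by positivity) (hU k)
  have hratio (k : Fin n) : max |a| |b| * ‖colRatio x k‖ < 1 := by
    rw [colRatio, norm_real, Real.norm_eq_abs, abs_div, ← mul_div_assoc, div_lt_one (hx k)]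
    exact hU k
  exact euler_rowMonomial_mul_comp_colRatio
    (G := fun z => ∑' m, cm α γ a b m * ∏ k, z k ^ m k) (abs_pos.1 (hx i))
    (differentiableAt_tsum_cm_mul_prod_update_pow α a b hγ hratio i)

/-- on `U₀` the series `F` is annihilated by the Euler operator
`θ_{1i} + θ_{2i} − α_i`. -/
theorem stmt10 {n : ℕ} (hn : 1 ≤ n) (α : Fin n → ℂ) (γ : ℂ) (a b : ℝ)
    (ha : 0 < a) (hab : a < b) (hγ : ∀ j : ℕ, γ ≠ -((j : ℂ) + 1))
    (i : Fin n) (x : (Fin 2 × Fin n) → ℝ) (hx : ∀ p, 0 < x p)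
    (hU : ∀ k, x (1, k) * b < x (0, k)) :
    (x (0, i) : ℂ) * pd (0, i) (Fser α γ a b) x
      + (x (1, i) : ℂ) * pd (1, i) (Fser α γ a b) x
      = α i * Fser α γ a b x := by
  refine stmt10_general α γ a b hγ i x fun k => ?_
  simpa only [abs_of_pos ha, abs_of_pos (ha.trans hab), max_eq_right hab.le, abs_of_pos (hx _),
    mul_comm b] using hU k
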